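/- arXiv:1605.03310 — 2 statements merged into one kernel-verified Lean document; each statement's English description precedes it below -/
import Mathlib

section
/- Assume the bounded-variance condition, the concave-penalty condition, and the sparse-eigenvalue condition with constants c > 0 and κ. Let β₀ ∈ B_{τ,κ} with s = ‖β₀‖₀, let β̂ be a global minimizer of Q_n over B_{τ,κ}, and assume ‖n⁻¹Xᵀε‖_∞ ≤ λ/2. Set C₀ = (1 + 2c₃)/(c·c₂) and assume C₀²λ² < τ². Then the number of falsely discovered signs satisfies FS(β̂) ≤ (C₀²λ²/τ²)·s / (1 − C₀²λ²/τ²). -/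
open scoped BigOperators Classical

/-- The number of nonzero coordinates of a vector (the `L₀` "norm"). -/
noncomputable def l0 {p : ℕ} (v : Fin p → ℝ) : ℕ :=
  (Finset.univ.filter fun j => v j ≠ 0).card

/-- The thresholded parameter space `B_{τ,κ}`: vectors with fewer than `κ/2` nonzero
coordinates, each nonzero coordinate having magnitude at least `τ`. -/
def Bset {p : ℕ} (τ : ℝ) (κ : ℕ) : Set (Fin p → ℝ) :=
  {β | 2 * l0 β < κ ∧ ∀ j, β j = 0 ∨ τ ≤ |β j|}

/-- The penalized negative log-likelihood
`Q_n(β) = −n⁻¹(yᵀXβ − Σᵢ b((Xβ)ᵢ)) + Σⱼ p_λ(|β_j|)`. -/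
noncomputable def Qn {n p : ℕ} (X : Matrix (Fin n) (Fin p) ℝ) (y : Fin n → ℝ)
    (b : ℝ → ℝ) (pen : ℝ → ℝ) (β : Fin p → ℝ) : ℝ :=
  -(1 / (n : ℝ)) * (∑ i, y i * X.mulVec β i - ∑ i, b (X.mulVec β i)) + ∑ j, pen |β j|

/-!
Strong convexity of `b` bounds the excess `Q_n(β̂) − Q_n(β₀)` from below by a quadratic in
`δ = β̂ − β₀` minus a noise term and a penalty difference, each at most a multiple of `‖δ‖₁`. As
the excess is nonpositive and `δ` is sparse, the sparse-eigenvalue condition gives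
`‖δ‖₂² ≤ C₀λ‖δ‖₁`, hence `‖δ‖₂² ≤ C₀²λ²‖δ‖₀` by Cauchy–Schwarz. The support of `δ` is contained in
the union of the false signs and the support of `β₀`, whereas thresholding makes every false sign
contribute at least `τ²` to `‖δ‖₂²`. Thus `τ² FS ≤ C₀²λ² (FS + s)`, which is solved for `FS`.
-/

open Filter Topology Finset Matrix

section Convexity

theorem add_lineDeriv_add_le_of_uniformConvexOn {E : Type*} [NormedAddCommGroup E]
    [NormedSpace ℝ E] {s : Set E} {φ : ℝ → ℝ} {f : E → ℝ} {f' : ℝ} {x y : E}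
    (hf : UniformConvexOn s φ f) (hx : x ∈ s) (hy : y ∈ s)
    (hf' : HasLineDerivAt ℝ f f' x (y - x)) :
    f x + f' + φ ‖y - x‖ ≤ f y := by
  have hslope : ∀ᶠ t in 𝓝[>] (0 : ℝ),
      t⁻¹ • (f (x + t • (y - x)) - f x) ≤ f y - f x - (1 - t) * φ ‖y - x‖ := by
    filter_upwards [Ioo_mem_nhdsGT one_pos] with t ht
    have hpoint : x + t • (y - x) = t • y + (1 - t) • x := by module
    have hconv := hf.2 hy hx ht.1.le (sub_nonneg.2 ht.2.le) (add_sub_cancel t 1)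
    rw [smul_eq_mul, inv_mul_le_iff₀ ht.1, hpoint]
    simp only [smul_eq_mul] at hconv
    linarith
  have hlim : Tendsto (fun t : ℝ => f y - f x - (1 - t) * φ ‖y - x‖) (𝓝[>] 0)
      (𝓝 (f y - f x - (1 - 0) * φ ‖y - x‖)) :=
    (Continuous.tendsto (by fun_prop) 0).mono_left nhdsWithin_le_nhds
  linarith [le_of_tendsto_of_tendsto hf'.tendsto_slope_zero_right hlim hslope]

theorem add_deriv_mul_add_sq_le_of_strongConvexOn {s : Set ℝ} {m x y : ℝ} {f : ℝ → ℝ}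
    (hf : StrongConvexOn s m f) (hx : x ∈ s) (hy : y ∈ s) (hfx : DifferentiableAt ℝ f x) :
    f x + deriv f x * (y - x) + m / 2 * (y - x) ^ 2 ≤ f y := by
  have hline := hfx.hasDerivAt.hasFDerivAt.hasLineDerivAt (y - x)
  simpa [mul_comm] using add_lineDeriv_add_le_of_uniformConvexOn hf hx hy hline

theorem strongConvexOn_of_hasDerivWithinAt2_ge {D : Set ℝ} (hD : Convex ℝ D) {m : ℝ}
    {f f' f'' : ℝ → ℝ} (hf : ContinuousOn f D)
    (hf' : ∀ x ∈ interior D, HasDerivWithinAt f (f' x) (interior D) x)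
    (hf'' : ∀ x ∈ interior D, HasDerivWithinAt f' (f'' x) (interior D) x)
    (hm : ∀ x ∈ interior D, m ≤ f'' x) : StrongConvexOn D m f := by
  rw [strongConvexOn_iff_convex]
  simp only [Real.norm_eq_abs, sq_abs]
  refine convexOn_of_hasDerivWithinAt2_nonneg hD (f' := fun x => f' x - m * x)
    (f'' := fun x => f'' x - m) (hf.sub (by fun_prop)) (fun x hx => ?_) (fun x hx => ?_)
    fun x hx => sub_nonneg.2 (hm x hx)
  · have hsq := ((hasDerivAt_pow 2 x).const_mul (m / 2)).hasDerivWithinAt (s := interior D)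
    exact ((hf' x hx).sub hsq).congr_deriv (by norm_num; ring)
  · have hlin := ((hasDerivAt_id x).const_mul m).hasDerivWithinAt (s := interior D)
    exact ((hf'' x hx).sub hlin).congr_deriv (by rw [mul_one])

theorem strongConvexOn_univ_of_le_deriv_deriv {f : ℝ → ℝ} {m : ℝ} (hf : ContDiff ℝ 2 f)
    (hm : ∀ x, m ≤ deriv (deriv f) x) : StrongConvexOn Set.univ m f :=
  strongConvexOn_of_hasDerivWithinAt2_ge convex_univ hf.continuous.continuousOn
    (fun x _ => (hf.differentiable two_ne_zero x).hasDerivAt.hasDerivWithinAt)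
    (fun x _ => (hf.differentiable_deriv_two x).hasDerivAt.hasDerivWithinAt) fun x _ => hm x

theorem abs_sub_le_of_concaveOn_of_monotoneOn_Ici {f : ℝ → ℝ} {a d : ℝ}
    (hconc : ConcaveOn ℝ (Set.Ici a) f) (hmono : MonotoneOn f (Set.Ici a))
    (hd : HasDerivWithinAt f d (Set.Ici a) a) :
    ∀ u ∈ Set.Ici a, ∀ v ∈ Set.Ici a, |f u - f v| ≤ d * |u - v| := by
  intro u hu v hv
  wlog huv : v < u generalizing u v
  · obtain rfl | hvu := (not_lt.1 huv).eq_or_lt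
    · simp
    · simpa only [abs_sub_comm] using this v hv u hu hvu
  have hslope : (f u - f v) / (u - v) ≤ d := by
    have from_endpoint {w : ℝ} (haw : a < w) : (f w - f a) / (w - a) ≤ d := by
      simpa only [slope_def_field] using
        hconc.slope_le_of_hasDerivWithinAt Set.self_mem_Ici haw.le haw hd
    obtain rfl | hav := (Set.mem_Ici.1 hv).eq_or_lt
    · exact from_endpoint huv
    · exact (hconc.slope_anti_adjacent Set.self_mem_Ici hu hav huv).trans (from_endpoint hav)
  rw [abs_of_nonneg (sub_nonneg.2 (hmono hv hu huv.le)), abs_of_pos (sub_pos.2 huv)]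
  exact (div_le_iff₀ (sub_pos.2 huv)).1 hslope

end Convexity

section Duality

theorem sum_mul_le_mul_sum_abs {ι R : Type*} [Ring R] [LinearOrder R] [IsOrderedRing R]
    {s : Finset ι} {a v : ι → R} {r : R} (ha : ∀ j ∈ s, |a j| ≤ r) :
    ∑ j ∈ s, a j * v j ≤ r * ∑ j ∈ s, |v j| := by
  rw [mul_sum]
  refine sum_le_sum fun j hj => (le_abs_self _).trans ?_
  rw [abs_mul]
  exact mul_le_mul_of_nonneg_right (ha j hj) (abs_nonneg _)

theorem mul_dotProduct_mulVec_le {m ι R : Type*} [Fintype m] [Fintype ι] [CommRing R]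
    [LinearOrder R] [IsOrderedRing R] {X : Matrix m ι R} {ε : m → R} {w r : R}
    (hε : ∀ j, |w * (Xᵀ *ᵥ ε) j| ≤ r) (v : ι → R) :
    w * (ε ⬝ᵥ X *ᵥ v) ≤ r * ∑ j, |v j| := by
  rw [dotProduct_mulVec, ← mulVec_transpose, dotProduct, mul_sum]
  simp only [← mul_assoc]
  exact sum_mul_le_mul_sum_abs fun j _ => hε j

end Duality

section Sparsity

theorem sq_sum_abs_le_l0_mul_sum_sq {p : ℕ} (v : Fin p → ℝ) :
    (∑ j, |v j|) ^ 2 ≤ l0 v * ∑ j, v j ^ 2 := by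
  have habs : ∑ j with v j ≠ 0, |v j| = ∑ j, |v j| :=
    sum_filter_of_ne fun j _ h => abs_ne_zero.1 h
  have hsq : ∑ j with v j ≠ 0, |v j| ^ 2 = ∑ j, v j ^ 2 := by
    simp only [sq_abs]
    exact sum_filter_of_ne fun j _ h => pow_ne_zero_iff two_ne_zero |>.1 h
  rw [← habs, ← hsq]
  exact sq_sum_le_card_mul_sum_sq

theorem sum_sq_le_sq_mul_l0 {p : ℕ} {v : Fin p → ℝ} {A : ℝ}
    (h : ∑ j, v j ^ 2 ≤ A * ∑ j, |v j|) : ∑ j, v j ^ 2 ≤ A ^ 2 * l0 v := by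
  have hnonneg : 0 ≤ ∑ j, v j ^ 2 := sum_nonneg fun j _ => sq_nonneg (v j)
  obtain hzero | hpos := hnonneg.eq_or_lt
  · rw [← hzero]
    positivity
  · refine le_of_mul_le_mul_right ?_ hpos
    calc (∑ j, v j ^ 2) * ∑ j, v j ^ 2
      _ ≤ (A * ∑ j, |v j|) * (A * ∑ j, |v j|) := mul_self_le_mul_self hnonneg h
      _ = A ^ 2 * (∑ j, |v j|) ^ 2 := by ring
      _ ≤ A ^ 2 * (l0 v * ∑ j, v j ^ 2) := by gcongr; exact sq_sum_abs_le_l0_mul_sum_sq v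
      _ = A ^ 2 * l0 v * ∑ j, v j ^ 2 := by ring

theorem l0_sub_le {p : ℕ} (v w : Fin p → ℝ) : l0 (v - w) ≤ l0 v + l0 w := by
  have hsupp : ({j | (v - w) j ≠ 0} : Finset (Fin p)) ⊆
      ({j | v j ≠ 0} : Finset (Fin p)) ∪ ({j | w j ≠ 0} : Finset (Fin p)) := fun j => by
    simp only [mem_union, mem_filter_univ, Pi.sub_apply]
    contrapose!
    rintro ⟨hv, hw⟩
    rw [hv, hw, sub_zero]
  exact (card_le_card hsupp).trans (card_union_le _ _)

theorem l0_sub_lt_of_mem_Bset {p κ : ℕ} {τ : ℝ} {v w : Fin p → ℝ} (hv : v ∈ Bset τ κ)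
    (hw : w ∈ Bset τ κ) : l0 (v - w) < κ := by
  have hsub := l0_sub_le v w
  have hv₀ := hv.1
  have hw₀ := hw.1
  omega

end Sparsity

section FalseSigns

/-- The coordinates in which the estimate `v` gets the sign of the target `w` wrong; `FS(v)` in the
paper is the cardinality of this set. -/
noncomputable def falseSigns {ι : Type*} [Fintype ι] (v w : ι → ℝ) : Finset ι :=
  Finset.univ.filter fun j => Real.sign (v j) ≠ Real.sign (w j)

theorem l0_sub_le_card_falseSigns_add_l0 {p : ℕ} (v w : Fin p → ℝ) :
    l0 (v - w) ≤ #(falseSigns v w) + l0 w := by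
  have hsupp : ({j | (v - w) j ≠ 0} : Finset (Fin p)) ⊆
      falseSigns v w ∪ ({j | w j ≠ 0} : Finset (Fin p)) := fun j => by
    simp only [falseSigns, mem_union, mem_filter_univ, Pi.sub_apply]
    contrapose!
    rintro ⟨hsign, hw⟩
    rw [hw, Real.sign_zero, Real.sign_eq_zero_iff] at hsign
    rw [hsign, hw, sub_zero]
  exact (card_le_card hsupp).trans (card_union_le _ _)

theorem abs_sub_eq_abs_add_abs_of_sign_ne {a b : ℝ} (h : Real.sign a ≠ Real.sign b) :
    |a - b| = |a| + |b| := by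
  rw [sub_eq_add_neg, ← abs_neg b, abs_add_eq_add_abs_iff]
  rcases lt_trichotomy a 0 with ha | rfl | ha <;> rcases lt_trichotomy b 0 with hb | rfl | hb <;>
    simp_all [Real.sign_of_neg, Real.sign_of_pos, le_of_lt]

theorem le_abs_sub_of_sign_ne {a b τ : ℝ} (ha : a = 0 ∨ τ ≤ |a|) (hb : b = 0 ∨ τ ≤ |b|)
    (h : Real.sign a ≠ Real.sign b) : τ ≤ |a - b| := by
  rw [abs_sub_eq_abs_add_abs_of_sign_ne h]
  rcases ha with rfl | ha
  · rcases hb with rfl | hb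
    · exact absurd rfl h
    · exact hb.trans (le_add_of_nonneg_left (abs_nonneg _))
  · exact ha.trans (le_add_of_nonneg_right (abs_nonneg _))

theorem card_falseSigns_mul_sq_le {ι : Type*} [Fintype ι] {v w : ι → ℝ} {τ : ℝ} (hτ : 0 ≤ τ)
    (hv : ∀ j, v j = 0 ∨ τ ≤ |v j|) (hw : ∀ j, w j = 0 ∨ τ ≤ |w j|) :
    #(falseSigns v w) * τ ^ 2 ≤ ∑ j, (v - w) j ^ 2 := by
  calc (#(falseSigns v w) : ℝ) * τ ^ 2
    _ = #(falseSigns v w) • τ ^ 2 := (nsmul_eq_mul _ _).symm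
    _ ≤ ∑ j ∈ falseSigns v w, (v - w) j ^ 2 := card_nsmul_le_sum _ _ _ fun j hj => by
      rw [← sq_abs ((v - w) j)]
      exact pow_le_pow_left₀ hτ (le_abs_sub_of_sign_ne (hv j) (hw j) (mem_filter_univ j |>.1 hj)) 2
    _ ≤ ∑ j, (v - w) j ^ 2 :=
      sum_le_sum_of_subset_of_nonneg (subset_univ _) fun j _ _ => sq_nonneg _

theorem le_mul_div_one_sub_of_le_mul_add {K : Type*} [Field K] [LinearOrder K]
    [IsStrictOrderedRing K] {a r s : K} (hr : r < 1) (h : a ≤ r * (a + s)) :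
    a ≤ r * s / (1 - r) := by
  rw [le_div_iff₀ (sub_pos.2 hr)]
  linarith

theorem card_falseSigns_le {p : ℕ} {v w : Fin p → ℝ} {A τ : ℝ} (hτ : 0 < τ)
    (hv : ∀ j, v j = 0 ∨ τ ≤ |v j|) (hw : ∀ j, w j = 0 ∨ τ ≤ |w j|) (hA : A ^ 2 < τ ^ 2)
    (h : ∑ j, (v - w) j ^ 2 ≤ A * ∑ j, |(v - w) j|) :
    #(falseSigns v w) ≤ A ^ 2 / τ ^ 2 * l0 w / (1 - A ^ 2 / τ ^ 2) := by
  have hτsq : 0 < τ ^ 2 := pow_pos hτ 2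
  refine le_mul_div_one_sub_of_le_mul_add ((div_lt_one hτsq).2 hA) ?_
  rw [div_mul_eq_mul_div, le_div_iff₀ hτsq]
  calc #(falseSigns v w) * τ ^ 2
    _ ≤ ∑ j, (v - w) j ^ 2 := card_falseSigns_mul_sq_le hτ.le hv hw
    _ ≤ A ^ 2 * l0 (v - w) := sum_sq_le_sq_mul_l0 h
    _ ≤ A ^ 2 * (#(falseSigns v w) + l0 w) := by
      gcongr
      exact_mod_cast l0_sub_le_card_falseSigns_add_l0 v w

end FalseSigns

section PenalizedLikelihood

variable {n p : ℕ} {X : Matrix (Fin n) (Fin p) ℝ} {b pen : ℝ → ℝ} {β₀ : Fin p → ℝ}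
  {ε y : Fin n → ℝ} {m : ℝ}

theorem le_Qn_sub_Qn (hb : Differentiable ℝ b) (hconv : StrongConvexOn Set.univ m b)
    (hy : ∀ i, y i = deriv b ((X *ᵥ β₀) i) + ε i) (β : Fin p → ℝ) :
    m / 2 * (1 / n * ∑ i, (X *ᵥ (β - β₀)) i ^ 2) - 1 / n * (ε ⬝ᵥ X *ᵥ (β - β₀)) +
      ∑ j, (pen |β j| - pen |β₀ j|) ≤ Qn X y b pen β - Qn X y b pen β₀ := by
  have hsum : ∑ i, (m / 2 * (X *ᵥ (β - β₀)) i ^ 2 - ε i * (X *ᵥ (β - β₀)) i) ≤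
      ∑ i, (b ((X *ᵥ β) i) - b ((X *ᵥ β₀) i) - (y i * (X *ᵥ β) i - y i * (X *ᵥ β₀) i)) := by
    refine sum_le_sum fun i _ => ?_
    have htaylor := add_deriv_mul_add_sq_le_of_strongConvexOn hconv
      (Set.mem_univ ((X *ᵥ β₀) i)) (Set.mem_univ ((X *ᵥ β) i)) (hb _)
    rw [mulVec_sub, Pi.sub_apply, hy i]
    linarith
  have hscaled := mul_le_mul_of_nonneg_left hsum (one_div_nonneg.2 (Nat.cast_nonneg (α := ℝ) n))
  simp only [sum_sub_distrib, ← mul_sum] at hscaled ⊢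
  simp only [Qn, dotProduct]
  linarith

theorem sum_sq_sub_le_of_Qn_le {c d r : ℝ} {β : Fin p → ℝ} (hb : Differentiable ℝ b)
    (hm : 0 < m) (hconv : StrongConvexOn Set.univ m b)
    (hy : ∀ i, y i = deriv b ((X *ᵥ β₀) i) + ε i)
    (hpen : ∀ u ∈ Set.Ici (0 : ℝ), ∀ v ∈ Set.Ici (0 : ℝ), |pen u - pen v| ≤ d * |u - v|)
    (hc : 0 < c) (hse : c * ∑ j, (β - β₀) j ^ 2 ≤ 1 / n * ∑ i, (X *ᵥ (β - β₀)) i ^ 2)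
    (hε : ∀ j, |1 / n * (Xᵀ *ᵥ ε) j| ≤ r) (hle : Qn X y b pen β ≤ Qn X y b pen β₀) :
    ∑ j, (β - β₀) j ^ 2 ≤ 2 * (r + d) / (c * m) * ∑ j, |(β - β₀) j| := by
  have hexcess := le_Qn_sub_Qn (pen := pen) hb hconv hy β
  have hnoise := mul_dotProduct_mulVec_le hε (β - β₀)
  have hd : 0 ≤ d := by
    simpa using (abs_nonneg _).trans (hpen 1 (Set.mem_Ici.2 zero_le_one) 0 Set.self_mem_Ici)
  have hpenalty : -(d * ∑ j, |(β - β₀) j|) ≤ ∑ j, (pen |β j| - pen |β₀ j|) := by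
    rw [mul_sum, ← sum_neg_distrib]
    refine sum_le_sum fun j _ => neg_le_of_abs_le ?_
    refine (hpen _ (abs_nonneg (β j)) _ (abs_nonneg (β₀ j))).trans ?_
    exact mul_le_mul_of_nonneg_left (abs_abs_sub_abs_le_abs_sub _ _) hd
  have hcurvature : m / 2 * (c * ∑ j, (β - β₀) j ^ 2) ≤ (r + d) * ∑ j, |(β - β₀) j| := by
    linarith [mul_le_mul_of_nonneg_left hse (half_pos hm).le]
  rw [div_mul_eq_mul_div, le_div_iff₀ (mul_pos hc hm)]
  linarith

end PenalizedLikelihood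

theorem false_signs_bound_general {n p : ℕ} (X : Matrix (Fin n) (Fin p) ℝ) (b : ℝ → ℝ)
    (hb : Differentiable ℝ b) (β₀ : Fin p → ℝ) (ε : Fin n → ℝ) (y : Fin n → ℝ)
    (hy : ∀ i, y i = deriv b (X.mulVec β₀ i) + ε i)
    (c₂ : ℝ) (hc₂ : 0 < c₂) (hconv : StrongConvexOn Set.univ c₂ b)
    (pen : ℝ → ℝ) (lam c₃ : ℝ)
    (hpen : ∀ u ∈ Set.Ici (0 : ℝ), ∀ v ∈ Set.Ici (0 : ℝ), |pen u - pen v| ≤ c₃ * lam * |u - v|)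
    (c : ℝ) (hc : 0 < c) (κ : ℕ)
    (hse : ∀ v : Fin p → ℝ, l0 v < κ →
      c * ∑ j, (v j) ^ 2 ≤ (1 / (n : ℝ)) * ∑ i, (X.mulVec v i) ^ 2)
    (τ : ℝ) (hτ : 0 < τ) (hβ₀ : β₀ ∈ Bset τ κ)
    (βh : Fin p → ℝ) (hβh : βh ∈ Bset τ κ) (hle : Qn X y b pen βh ≤ Qn X y b pen β₀)
    (hE : ∀ j, |(1 / (n : ℝ)) * ∑ i, X i j * ε i| ≤ lam / 2)
    (C₀ : ℝ) (hC₀ : C₀ = (1 + 2 * c₃) / (c * c₂)) (hsmall : C₀ ^ 2 * lam ^ 2 < τ ^ 2) :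
    (#(falseSigns βh β₀) : ℝ) ≤
      (C₀ ^ 2 * lam ^ 2 / τ ^ 2) * (l0 β₀ : ℝ) / (1 - C₀ ^ 2 * lam ^ 2 / τ ^ 2) := by
  have hestimation : ∑ j, (βh - β₀) j ^ 2 ≤ C₀ * lam * ∑ j, |(βh - β₀) j| := by
    have hconstant : C₀ * lam = 2 * (lam / 2 + c₃ * lam) / (c * c₂) := by rw [hC₀]; ring
    rw [hconstant]
    exact sum_sq_sub_le_of_Qn_le hb hc₂ hconv hy hpen hc
      (hse _ (l0_sub_lt_of_mem_Bset hβh hβ₀)) hE hle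
  rw [← mul_pow] at hsmall ⊢
  exact card_falseSigns_le hτ hβh.2 hβ₀.2 hsmall hestimation

/-- Deterministic form of Theorem 1(a): on the event `‖n⁻¹Xᵀε‖_∞ ≤ λ/2` and with
`C₀ = (1 + 2c₃)/(c·c₂)`, `C₀²λ² < τ²`, the number of falsely discovered signs of the
global minimizer satisfies `FS(β̂) ≤ (C₀²λ²/τ²)·s / (1 − C₀²λ²/τ²)`. -/
theorem false_signs_bound {n p : ℕ} (hn : 0 < n) (hp : 0 < p)
    (X : Matrix (Fin n) (Fin p) ℝ) (b : ℝ → ℝ) (hb : ContDiff ℝ 2 b)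
    (β₀ : Fin p → ℝ) (ε : Fin n → ℝ) (y : Fin n → ℝ)
    (hy : ∀ i, y i = deriv b (X.mulVec β₀ i) + ε i)
    -- bounded-variance condition
    (c₂ : ℝ) (hc₂ : 0 < c₂) (hc₂1 : c₂ ≤ 1)
    (hvar : ∀ θ : ℝ, c₂ ≤ deriv (deriv b) θ ∧ deriv (deriv b) θ ≤ c₂⁻¹)
    -- concave-penalty condition
    (pen : ℝ → ℝ) (lam c₃ : ℝ) (hc₃ : 0 < c₃) (hlam : 0 ≤ lam)
    (hmono : MonotoneOn pen (Set.Ici 0))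
    (hconc : ConcaveOn ℝ (Set.Ici 0) pen)
    (hpen0 : pen 0 = 0)
    (hpendiff : DifferentiableOn ℝ pen (Set.Ioi 0))
    (hpend0 : HasDerivWithinAt pen (c₃ * lam) (Set.Ici 0) 0)
    -- sparse-eigenvalue (robust spark) condition
    (c : ℝ) (hc : 0 < c) (κ : ℕ)
    (hse : ∀ v : Fin p → ℝ, l0 v < κ →
      c * ∑ j, (v j) ^ 2 ≤ (1 / (n : ℝ)) * ∑ i, (X.mulVec v i) ^ 2)
    -- thresholded parameter space and global minimizer
    (τ : ℝ) (hτ : 0 < τ) (hβ₀ : β₀ ∈ Bset τ κ)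
    (βh : Fin p → ℝ) (hβh : βh ∈ Bset τ κ)
    (hmin : ∀ β ∈ Bset τ κ, Qn X y b pen βh ≤ Qn X y b pen β)
    -- the event `‖n⁻¹Xᵀε‖_∞ ≤ λ/2`
    (hE : ∀ j, |(1 / (n : ℝ)) * ∑ i, X i j * ε i| ≤ lam / 2)
    -- the explicit constant
    (C₀ : ℝ) (hC₀ : C₀ = (1 + 2 * c₃) / (c * c₂))
    (hsmall : C₀ ^ 2 * lam ^ 2 < τ ^ 2) :
    ((Finset.univ.filter fun j => Real.sign (βh j) ≠ Real.sign (β₀ j)).card : ℝ) ≤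
      (C₀ ^ 2 * lam ^ 2 / τ ^ 2) * (l0 β₀ : ℝ) / (1 - C₀ ^ 2 * lam ^ 2 / τ ^ 2) :=
  false_signs_bound_general X b (hb.differentiable two_ne_zero) β₀ ε y hy c₂ hc₂
    (strongConvexOn_univ_of_le_deriv_deriv hb fun θ => (hvar θ).1) pen lam c₃
    (abs_sub_le_of_concaveOn_of_monotoneOn_Ici hconc hmono hpend0) c hc κ hse τ hτ hβ₀ βh hβh
    (hmin β₀ hβ₀) hE C₀ hC₀ hsmall
end

section
/- Assume b : ℝ → ℝ is twice continuously differentiable with b''(θ) ≥ c₂ > 0 for all θ, assume the sparse-eigenvalue condition with constants c > 0 and κ, and assume the penalty p_λ : [0,∞) → ℝ is increasing, continuous, differentiable on (0,∞), has finite right derivative at 0, and has maximum concavity ρ(p_λ) := sup_{0 < t₁ < t₂ < ∞} {−(p_λ'(t₂) − p_λ'(t₁))/(t₂ − t₁)} < c·c₂. Then for every subset α ⊆ {1,…,p} with |α| < κ, the function Q_n(β) = −n⁻¹(yᵀXβ − Σ_{i=1}^n b((Xβ)ᵢ)) + Σ_{j=1}^p p_λ(|β_j|) is strictly convex on the coordinate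 subspace {β ∈ ℝ^p : β_j = 0 for all j ∉ α}. -/
open scoped BigOperators Classical

/-!
A function of the form `x ↦ ∑ i, f i (ℓ i x)`, with `ℓ i` linear and `f i` strongly convex of
modulus `m i` (of either sign), inherits at the pair `x, y` the curvature
`∑ i, m i * (ℓ i (x - y)) ^ 2`; it is strictly convex as soon as these sums are positive. The
objective `Qn` has this form: each observation contributes modulus `c₂ / n` along a row of `X`, and
each penalty term contributes modulus `-ρ` along a coordinate, since the bound `ρ` on the concavity
of the penalty says exactly that it is strongly convex of modulus `-ρ` on `[0, ∞)`. On a sparse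
subspace the eigenvalue condition lets the likelihood win.

The passage from `t ↦ pen t` to `x ↦ pen |x|` relies on `t ↦ pen t + ρ / 2 * t ^ 2` being
increasing on `[0, ∞)`, even for negative `ρ`: by quadratic growth, a monotone strongly convex
function still has its minimum at `0` after subtraction of its quadratic part.
-/

open Set

section NormedSpace

variable {E : Type*} [NormedAddCommGroup E] [NormedSpace ℝ E] {s : Set E} {f : E → ℝ} {m : ℝ}

lemma strongConvexOn_const_mul {w : ℝ} (hw : 0 ≤ w) (hf : StrongConvexOn s m f) :
    StrongConvexOn s (w * m) fun x => w * f x := by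
  refine ⟨hf.1, fun x hx y hy a b ha hb hab => ?_⟩
  have h := mul_le_mul_of_nonneg_left (hf.2 hx hy ha hb hab) hw
  simp only [smul_eq_mul] at h ⊢
  linarith

lemma strongConvexOn_sub_concaveOn {g : E → ℝ} (hf : StrongConvexOn s m f)
    (hg : ConcaveOn ℝ s g) :
    StrongConvexOn s m fun x => f x - g x := by
  have h := UniformConvexOn.sub hf hg.uniformConcaveOn_zero
  rwa [add_zero] at h

/- Compare `y` with the points `(1 - t) • x + t • y` and let `t → 0`. -/
lemma strongConvexOn_quadratic_growth {x y : E} (hf : StrongConvexOn s m f)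
    (hmin : IsMinOn f s x) (hx : x ∈ s) (hy : y ∈ s) :
    f x + m / 2 * ‖x - y‖ ^ 2 ≤ f y := by
  have growth_of_pos : ∀ t ∈ Ioo (0 : ℝ) 1,
      f x + (1 - t) * (m / 2 * ‖x - y‖ ^ 2) ≤ f y := by
    rintro t ⟨ht₀, ht₁⟩
    have hle := (hmin (hf.1 hx hy (sub_nonneg.2 ht₁.le) ht₀.le (by ring))).trans
      (hf.2 hx hy (sub_nonneg.2 ht₁.le) ht₀.le (by ring))
    simp only [smul_eq_mul] at hle
    refine le_of_mul_le_mul_left ?_ ht₀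
    linarith
  have tendsto_growth : Filter.Tendsto (fun t : ℝ => f x + (1 - t) * (m / 2 * ‖x - y‖ ^ 2))
      (nhdsWithin 0 (Ioi 0)) (nhds (f x + m / 2 * ‖x - y‖ ^ 2)) :=
    (Continuous.tendsto' (by fun_prop) _ _ (by simp)).mono_left nhdsWithin_le_nhds
  exact le_of_tendsto tendsto_growth
    (Filter.mem_of_superset (Ioo_mem_nhdsGT one_pos) growth_of_pos)

end NormedSpace

lemma strongConvexOn_of_mul_sub_le_deriv_sub {D : Set ℝ} {f : ℝ → ℝ} {m : ℝ} (hD : Convex ℝ D)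
    (hcont : ContinuousOn f D) (hdiff : DifferentiableOn ℝ f (interior D))
    (hderiv : ∀ u ∈ interior D, ∀ v ∈ interior D, u < v →
      m * (v - u) ≤ deriv f v - deriv f u) :
    StrongConvexOn D m f := by
  have hasDerivAt_sub_sq : ∀ u ∈ interior D,
      HasDerivAt (fun t => f t - m / 2 * ‖t‖ ^ 2) (deriv f u - m * u) u := fun u hu => by
    have hf := (hdiff.differentiableAt (isOpen_interior.mem_nhds hu)).hasDerivAt
    simp only [Real.norm_eq_abs, sq_abs]
    exact (hf.sub ((hasDerivAt_pow 2 u).const_mul (m / 2))).congr_deriv (by ring)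
  refine strongConvexOn_iff_convex.2 (MonotoneOn.convexOn_of_deriv hD
    (hcont.sub (by fun_prop))
    (fun u hu => (hasDerivAt_sub_sq u hu).differentiableAt.differentiableWithinAt) ?_)
  intro u hu v hv huv
  rw [(hasDerivAt_sub_sq u hu).deriv, (hasDerivAt_sub_sq v hv).deriv]
  rcases huv.eq_or_lt with rfl | hlt
  · exact le_rfl
  · linarith [hderiv u hu v hv hlt]

lemma strongConvexOn_univ_of_le_deriv2 {f : ℝ → ℝ} {m : ℝ} (hf : Differentiable ℝ f)
    (hf' : Differentiable ℝ (deriv f)) (hm : ∀ x, m ≤ deriv (deriv f) x) :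
    StrongConvexOn univ m f :=
  strongConvexOn_of_mul_sub_le_deriv_sub convex_univ hf.continuous.continuousOn
    hf.differentiableOn fun _ _ _ _ huv => mul_sub_le_image_sub_of_le_deriv hf' hm huv.le

lemma strongConvexOn_Ici_of_neg_slope_deriv_le {f : ℝ → ℝ} {a ρ : ℝ}
    (hcont : ContinuousOn f (Ici a)) (hdiff : DifferentiableOn ℝ f (Ioi a))
    (hρ : ∀ u v, a < u → u < v → -((deriv f v - deriv f u) / (v - u)) ≤ ρ) :
    StrongConvexOn (Ici a) (-ρ) f := by
  refine strongConvexOn_of_mul_sub_le_deriv_sub (convex_Ici a) hcont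
    (by rwa [interior_Ici]) fun u hu v _ huv => ?_
  rw [interior_Ici] at hu
  rw [← le_div_iff₀ (sub_pos.2 huv)]
  exact neg_le.1 (hρ u v hu huv)

lemma monotoneOn_Ici_of_convexOn_of_isMinOn {f : ℝ → ℝ} {a : ℝ} (hf : ConvexOn ℝ (Ici a) f)
    (hmin : IsMinOn f (Ici a) a) : MonotoneOn f (Ici a) := fun _ hu _ hv huv =>
  (hf.le_max_of_mem_Icc self_mem_Ici hv ⟨hu, huv⟩).trans (max_eq_right (hmin hv)).le

lemma monotoneOn_sub_sq_of_strongConvexOn {f : ℝ → ℝ} {m : ℝ} (hmono : MonotoneOn f (Ici 0))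
    (hf : StrongConvexOn (Ici 0) m f) :
    MonotoneOn (fun t => f t - m / 2 * ‖t‖ ^ 2) (Ici 0) := by
  refine monotoneOn_Ici_of_convexOn_of_isMinOn (strongConvexOn_iff_convex.1 hf) fun t ht => ?_
  have isMinOn_zero : IsMinOn f (Ici 0) 0 := fun u hu => hmono self_mem_Ici hu hu
  have growth := strongConvexOn_quadratic_growth hf isMinOn_zero self_mem_Ici ht
  simp only [zero_sub, norm_neg] at growth
  simpa [le_sub_iff_add_le] using growth

lemma strongConvexOn_univ_comp_norm {E : Type*} [NormedAddCommGroup E] [InnerProductSpace ℝ E]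
    {f : ℝ → ℝ} {m : ℝ} (hmono : MonotoneOn f (Ici 0)) (hf : StrongConvexOn (Ici 0) m f) :
    StrongConvexOn univ m fun x : E => f ‖x‖ := by
  have image_norm_subset : norm '' (univ : Set E) ⊆ Ici 0 :=
    image_subset_iff.2 fun x _ => norm_nonneg x
  have convex_image_norm : Convex ℝ (norm '' (univ : Set E)) :=
    (isPreconnected_univ.image norm continuous_norm.continuousOn).ordConnected.convex
  have hconv := ((strongConvexOn_iff_convex.1 hf).subset image_norm_subset convex_image_norm).comp
    convexOn_univ_norm ((monotoneOn_sub_sq_of_strongConvexOn hmono hf).mono image_norm_subset)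
  exact strongConvexOn_iff_convex.2 (by simpa only [Function.comp_def, norm_norm] using hconv)

lemma strictConvexOn_sum_comp_linearMap {ι E : Type*} [Fintype ι] [AddCommGroup E] [Module ℝ E]
    {f : ι → ℝ → ℝ} {m : ι → ℝ} {ℓ : ι → E →ₗ[ℝ] ℝ} {S : Set E} (hS : Convex ℝ S)
    (hf : ∀ i, StrongConvexOn univ (m i) (f i))
    (hpos : ∀ u ∈ S, ∀ v ∈ S, u ≠ v → 0 < ∑ i, m i * ℓ i (u - v) ^ 2) :
    StrictConvexOn ℝ S fun x => ∑ i, f i (ℓ i x) := by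
  refine ⟨hS, fun u hu v hv huv a b ha hb hab => ?_⟩
  have hgap : 0 < a * b / 2 * ∑ i, m i * ℓ i (u - v) ^ 2 :=
    mul_pos (by positivity) (hpos u hu v hv huv)
  calc ∑ i, f i (ℓ i (a • u + b • v))
      ≤ ∑ i, (a * f i (ℓ i u) + b * f i (ℓ i v) - a * b / 2 * (m i * ℓ i (u - v) ^ 2)) := by
        refine Finset.sum_le_sum fun i _ => ?_
        have h := (hf i).2 (mem_univ (ℓ i u)) (mem_univ (ℓ i v)) ha.le hb.le hab
        simp only [← map_smul, ← map_add, ← map_sub, Real.norm_eq_abs, sq_abs] at h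
        simp only [smul_eq_mul] at h
        linarith
    _ = a * ∑ i, f i (ℓ i u) + b * ∑ i, f i (ℓ i v)
          - a * b / 2 * ∑ i, m i * ℓ i (u - v) ^ 2 := by
        simp only [Finset.sum_sub_distrib, Finset.sum_add_distrib, Finset.mul_sum]
    _ < a • ∑ i, f i (ℓ i u) + b • ∑ i, f i (ℓ i v) := sub_lt_self _ hgap

lemma mul_sum_sq_lt_mul {ι : Type*} [Fintype ι] {v : ι → ℝ} {A c c₂ ρ : ℝ} (hc₂ : 0 ≤ c₂)
    (hρ : ρ < c * c₂) (hA : c * ∑ j, v j ^ 2 ≤ A) (hv : v ≠ 0) :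
    ρ * ∑ j, v j ^ 2 < c₂ * A := by
  have sum_sq_pos : 0 < ∑ j, v j ^ 2 := by
    obtain ⟨j, hj⟩ := Function.ne_iff.1 hv
    exact Finset.sum_pos' (fun j _ => sq_nonneg _) ⟨j, Finset.mem_univ j, sq_pos_of_ne_zero hj⟩
  calc ρ * ∑ j, v j ^ 2 < c * c₂ * ∑ j, v j ^ 2 := mul_lt_mul_of_pos_right hρ sum_sq_pos
    _ = c₂ * (c * ∑ j, v j ^ 2) := by ring
    _ ≤ c₂ * A := mul_le_mul_of_nonneg_left hA hc₂

section PenalizedLikelihood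

variable {n p : ℕ} (X : Matrix (Fin n) (Fin p) ℝ)

lemma Qn_eq_sum (y : Fin n → ℝ) (b pen : ℝ → ℝ) :
    Qn X y b pen = fun β =>
      ∑ i, 1 / (n : ℝ) * (b (X.mulVec β i) - y i * X.mulVec β i) + ∑ j, pen ‖β j‖ := by
  ext β
  simp only [Qn, Real.norm_eq_abs, ← Finset.mul_sum, Finset.sum_sub_distrib]
  ring

lemma l0_le_card {v : Fin p → ℝ} {α : Finset (Fin p)} (hv : ∀ j ∉ α, v j = 0) :
    l0 v ≤ α.card :=
  Finset.card_le_card fun j hj => by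
    by_contra hjα
    exact (Finset.mem_filter.1 hj).2 (hv j hjα)

theorem strict_convexity_on_sparse_subspaces_general (y : Fin n → ℝ) {b pen : ℝ → ℝ} {c₂ ρ : ℝ}
    (hb : StrongConvexOn univ c₂ b) (hmono : MonotoneOn pen (Ici 0))
    (hpen : StrongConvexOn (Ici 0) (-ρ) pen) {S : Set (Fin p → ℝ)} (hS : Convex ℝ S)
    (hcurv : ∀ u ∈ S, ∀ v ∈ S, u ≠ v →
      ρ * ∑ j, (u - v) j ^ 2 < c₂ * (1 / (n : ℝ) * ∑ i, X.mulVec (u - v) i ^ 2)) :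
    StrictConvexOn ℝ S (Qn X y b pen) := by
  have loss_strongConvexOn (i : Fin n) : StrongConvexOn univ (1 / (n : ℝ) * c₂)
      fun t => 1 / (n : ℝ) * (b t - y i * t) :=
    strongConvexOn_const_mul (by positivity)
      (strongConvexOn_sub_concaveOn hb ((LinearMap.mul ℝ ℝ (y i)).concaveOn convex_univ))
  have penalty_strongConvexOn : StrongConvexOn univ (-ρ) fun t : ℝ => pen ‖t‖ :=
    strongConvexOn_univ_comp_norm hmono hpen
  have strictConvexOn_sum := strictConvexOn_sum_comp_linearMap (ι := Fin n ⊕ Fin p) hS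
    (f := Sum.elim (fun i t => 1 / (n : ℝ) * (b t - y i * t)) fun _ t => pen ‖t‖)
    (m := Sum.elim (fun _ => 1 / (n : ℝ) * c₂) fun _ => -ρ)
    (ℓ := Sum.elim (fun i => LinearMap.proj i ∘ₗ X.mulVecLin) LinearMap.proj)
    (Sum.rec loss_strongConvexOn fun _ => penalty_strongConvexOn)
    (fun u hu v hv huv => by
      simp only [Fintype.sum_sum_type, Sum.elim_inl, Sum.elim_inr, ← Finset.mul_sum,
        LinearMap.comp_apply, LinearMap.proj_apply, Matrix.mulVecLin_apply]
      linarith [hcurv u hu v hv huv])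
  simpa only [Qn_eq_sum, Fintype.sum_sum_type, Sum.elim_inl, Sum.elim_inr, LinearMap.comp_apply,
    LinearMap.proj_apply, Matrix.mulVecLin_apply] using strictConvexOn_sum

end PenalizedLikelihood

/-- Claim of Section 5.1 (condition (e076)): if the maximum concavity of the penalty,
`ρ(p_λ) = sup_{0<t₁<t₂} {−(p_λ'(t₂) − p_λ'(t₁))/(t₂ − t₁)}`, is less than `c·c₂`, then
the penalized objective `Q_n` is strictly convex on every sparse coordinate subspace
`{β : β_j = 0 for j ∉ α}` with `|α| < κ`. -/
theorem strict_convexity_on_sparse_subspaces {n p : ℕ} (hn : 0 < n) (hp : 0 < p)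
    (X : Matrix (Fin n) (Fin p) ℝ) (y : Fin n → ℝ)
    (b : ℝ → ℝ) (hb : ContDiff ℝ 2 b)
    (c₂ : ℝ) (hc₂ : 0 < c₂) (hvar : ∀ θ : ℝ, c₂ ≤ deriv (deriv b) θ)
    (c : ℝ) (hc : 0 < c) (κ : ℕ)
    (hse : ∀ v : Fin p → ℝ, l0 v < κ →
      c * ∑ j, (v j) ^ 2 ≤ (1 / (n : ℝ)) * ∑ i, (X.mulVec v i) ^ 2)
    (pen : ℝ → ℝ)
    (hmono : MonotoneOn pen (Set.Ici 0))
    (hcont : ContinuousOn pen (Set.Ici 0))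
    (hdiff : DifferentiableOn ℝ pen (Set.Ioi 0))
    (L : ℝ) (hL : HasDerivWithinAt pen L (Set.Ici 0) 0)
    -- maximum concavity `ρ(p_λ) < c·c₂`
    (ρ₀ : ℝ) (hρlt : ρ₀ < c * c₂)
    (hρ : ∀ t₁ t₂ : ℝ, 0 < t₁ → t₁ < t₂ →
      -((deriv pen t₂ - deriv pen t₁) / (t₂ - t₁)) ≤ ρ₀) :
    ∀ α : Finset (Fin p), α.card < κ →
      StrictConvexOn ℝ {β : Fin p → ℝ | ∀ j ∉ α, β j = 0} (Qn X y b pen) := by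
  intro α hα
  exact strict_convexity_on_sparse_subspaces_general X y
    (strongConvexOn_univ_of_le_deriv2 (hb.differentiable two_ne_zero)
      hb.differentiable_deriv_two hvar)
    hmono (strongConvexOn_Ici_of_neg_slope_deriv_le hcont hdiff hρ)
    (Submodule.pi (α : Set (Fin p))ᶜ fun _ => ⊥).convex
    fun u hu v hv huv => mul_sum_sq_lt_mul hc₂.le hρlt
      (hse _ <| (l0_le_card fun j hj => by simp [hu j hj, hv j hj]).trans_lt hα)
      (sub_ne_zero.2 huv)
end
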